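/- Let α > 0 with α ≠ 1, and let Λ ∈ ℂ \ [0,∞). Let μ₊ = −1/α + √(1/α² − 1) and μ₋ = −1/α − √(1/α² − 1) (principal branch of the square root). Then there exist a constant C > 0 and two sequences w⁺, w⁻ : {…,−2,−1,0} → ℂ, each satisfying (n+1/2)·w_{n+1} − (2/α)·√(n²−Λ)·w_n + (n−1/2)·w_{n−1} = 0 for all n ≤ −1, such that | |n|^{1/2} · μ₊^{−n} · w⁺_n − 1| ≤ C/|n| and | |n|^{1/2} · μ₋^{−n} · w⁻_n − 1| ≤ C/|n| for all n ≤ −1. -/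

import Mathlib

open Complex

lemma ba_hasSum (n : ℕ) (hn : 1 ≤ n) (K : ℝ) :
    HasSum (fun i : ℕ => K * (1 / ((n : ℝ) + i) - 1 / ((n : ℝ) + i + 1))) (K / n) := by
  have hn' : (1 : ℝ) ≤ n := by exact_mod_cast hn
  have h : HasSum (fun i : ℕ => (1 / ((n : ℝ) + i) - 1 / ((n : ℝ) + i + 1))) (1 / n) := by
    rw [hasSum_iff_tendsto_nat_of_nonneg]
    · have h1 : ∀ j : ℕ, ∑ i ∈ Finset.range j, (1 / ((n : ℝ) + i) - 1 / ((n : ℝ) + i + 1))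
          = 1 / n - 1 / ((n : ℝ) + j) := by
        intro j
        have := Finset.sum_range_sub' (fun i : ℕ => 1 / ((n : ℝ) + i)) j
        simp only [Nat.cast_add, Nat.cast_one, Nat.cast_zero, add_zero, ← add_assoc] at this
        exact this
      simp_rw [h1]
      have h2 : Filter.Tendsto (fun j : ℕ => 1 / ((n : ℝ) + j)) Filter.atTop (nhds 0) := by
        simp_rw [one_div]
        exact (Filter.tendsto_atTop_add_const_left _ _ tendsto_natCast_atTop_atTop).inv_tendsto_atTop
      simpa using h2.const_sub (1 / (n : ℝ))
    · intro i
      rw [sub_nonneg]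
      apply one_div_le_one_div_of_le <;> [positivity; linarith]
  simpa [div_eq_mul_inv] using h.mul_left K

lemma ba_sq (x K : ℝ) (hx : 0 < x) (hK : 0 ≤ K) :
    K / (x + 1) ^ 2 ≤ K * (1 / x - 1 / (x + 1)) := by
  have : 1 / x - 1 / (x + 1) = 1 / (x * (x + 1)) := by field_simp; ring
  rw [this, div_eq_mul_one_div]
  apply mul_le_mul_of_nonneg_left _ hK
  apply one_div_le_one_div_of_le (by positivity)
  nlinarith

/-- tail bound -/
lemma ba_tail (n : ℕ) (hn : 1 ≤ n) (K : ℝ) (hK : 0 ≤ K) (f : ℕ → ℂ)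
    (hf : ∀ i, ‖f i‖ ≤ K / ((n : ℝ) + i + 1) ^ 2) : Summable f ∧ ‖∑' i, f i‖ ≤ K / n := by
  have hn' : (1 : ℝ) ≤ n := by exact_mod_cast hn
  have h : ∀ i : ℕ, ‖f i‖ ≤ K * (1 / ((n : ℝ) + i) - 1 / ((n : ℝ) + i + 1)) := fun i =>
    (hf i).trans (ba_sq _ _ (by positivity) hK)
  exact ⟨Summable.of_norm_bounded (ba_hasSum n hn K).summable h,
    tsum_of_norm_bounded (ba_hasSum n hn K) h⟩

lemma ba_rec (ρ σ : ℂ) (hρσ : ρ * σ = 1) (hρ2 : ρ ^ 2 ≠ 1) (hρ : ‖ρ‖ ≤ 1) (K : ℝ) (hK : 0 ≤ K)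
    (N : ℕ) (hN : 1 ≤ N) (hN2 : 8 * ‖ρ / (1 - ρ ^ 2)‖ * K ≤ N) (a b : ℕ → ℂ)
    (ha : ∀ j, ‖a j‖ ≤ K / ((N : ℝ) + j + 1) ^ 2) (hb : ∀ j, ‖b j‖ ≤ K / ((N : ℝ) + j + 1) ^ 2) :
    ∃ (u : ℕ → ℂ) (C : ℝ), (∀ j, ρ * (u (j + 2) - u (j + 1)) - σ * (u (j + 1) - u j)
      = a j * u (j + 1) + b j * u j) ∧ ∀ j, ‖u j - 1‖ ≤ C / ((N : ℝ) + j) := by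
  set c := ρ / (1 - ρ ^ 2) with hc
  have hN' : (1 : ℝ) ≤ N := by exact_mod_cast hN
  let F : (ℕ → ℂ) → ℕ → ℂ := fun u j => a j * u (j + 1) + b j * u j
  have hF : ∀ (u : ℕ → ℂ) (B : ℝ), (∀ j, ‖u j‖ ≤ B) → ∀ j, ‖F u j‖ ≤ 2 * K * B / ((N : ℝ) + j + 1) ^ 2 := by
    intro u B hu j
    have h1 : ‖a j * u (j + 1)‖ ≤ K / ((N : ℝ) + j + 1) ^ 2 * B := by
      rw [norm_mul]; exact mul_le_mul (ha j) (hu _) (norm_nonneg _) (by positivity)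
    have h2 : ‖b j * u j‖ ≤ K / ((N : ℝ) + j + 1) ^ 2 * B := by
      rw [norm_mul]; exact mul_le_mul (hb j) (hu _) (norm_nonneg _) (by positivity)
    calc _ ≤ _ := norm_add_le _ _
      _ ≤ _ := add_le_add h1 h2
      _ = _ := by ring
  let A : (ℕ → ℂ) → ℕ → ℂ := fun u j => ∑' i : ℕ, c * (1 - ρ ^ (2 * i + 2)) * F u (j + i)
  have hG : ∀ i : ℕ, ‖c * (1 - ρ ^ (2 * i + 2))‖ ≤ 2 * ‖c‖ := by
    intro i
    rw [norm_mul, mul_comm]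
    apply mul_le_mul_of_nonneg_right _ (norm_nonneg _)
    calc _ ≤ ‖(1 : ℂ)‖ + ‖ρ ^ (2 * i + 2)‖ := norm_sub_le _ _
      _ ≤ 1 + 1 := by
        rw [norm_one, norm_pow]
        gcongr
        exact pow_le_one₀ (norm_nonneg _) hρ
      _ = 2 := by norm_num
  have hT : ∀ (u : ℕ → ℂ) (B : ℝ), 0 ≤ B → (∀ j, ‖u j‖ ≤ B) → ∀ j,
      Summable (fun i : ℕ => c * (1 - ρ ^ (2 * i + 2)) * F u (j + i)) ∧
      ‖A u j‖ ≤ (4 * ‖c‖ * K * B) / ((N : ℝ) + j) := by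
    intro u B hB hu j
    have := ba_tail (N + j) (by omega) (4 * ‖c‖ * K * B) (by positivity)
      (fun i : ℕ => c * (1 - ρ ^ (2 * i + 2)) * F u (j + i)) (by
        intro i
        rw [norm_mul]
        calc _ ≤ (2 * ‖c‖) * (2 * K * B / ((N : ℝ) + (j + i : ℕ) + 1) ^ 2) :=
              mul_le_mul (hG i) (hF u B hu _) (norm_nonneg _) (by positivity)
          _ = _ := by push_cast; ring)
    push_cast at this
    exact this
  have hT2 : ∀ (u : ℕ → ℂ) (B : ℝ), 0 ≤ B → (∀ j, ‖u j‖ ≤ B) → ∀ j, ‖A u j‖ ≤ 1 / 2 * B := by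
    intro u B hB hu j
    refine (hT u B hB hu j).2.trans ?_
    rw [div_le_iff₀ (by positivity)]
    have : (0 : ℝ) ≤ j := by positivity
    nlinarith [mul_le_mul_of_nonneg_right hN2 hB, mul_nonneg this hB]
  have hu0 : ∀ (u : BoundedContinuousFunction ℕ ℂ) j, ‖u j‖ ≤ ‖u‖ := fun u j => u.norm_coe_le_norm j
  let T : BoundedContinuousFunction ℕ ℂ → BoundedContinuousFunction ℕ ℂ := fun u =>
    BoundedContinuousFunction.ofNormedAddCommGroupDiscrete (fun j => 1 + A u j) (1 + 1 / 2 * ‖u‖) (by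
      intro j
      refine (norm_add_le _ _).trans ?_
      rw [norm_one]
      linarith [hT2 u ‖u‖ (norm_nonneg _) (hu0 u) j])
  have hTval : ∀ u j, T u j = 1 + A u j := fun u j => rfl
  have hcon : ContractingWith (1 / 2) T := by
    refine ⟨by rw [← NNReal.coe_lt_coe]; norm_num, LipschitzWith.of_dist_le_mul ?_⟩
    intro u v
    rw [BoundedContinuousFunction.dist_le (by positivity)]
    intro j
    rw [hTval, hTval, dist_eq_norm, dist_eq_norm]
    have hs1 := (hT u ‖u‖ (norm_nonneg _) (hu0 u) j).1
    have hs2 := (hT v ‖v‖ (norm_nonneg _) (hu0 v) j).1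
    have : (1 + A u j) - (1 + A v j) = A (u - v : BoundedContinuousFunction ℕ ℂ) j := by
      rw [add_sub_add_left_eq_sub]
      simp only [A]
      rw [← hs1.tsum_sub hs2]
      congr 1; ext i
      simp only [F, BoundedContinuousFunction.coe_sub, Pi.sub_apply]
      ring
    rw [this]
    have := hT2 (u - v : BoundedContinuousFunction ℕ ℂ) ‖u - v‖ (norm_nonneg _) (hu0 _) j
    simpa using this
  obtain ⟨u, hu⟩ : ∃ u, T u = u := ⟨_, hcon.fixedPoint_isFixedPt⟩
  have hfix : ∀ j, u j = 1 + A u j := fun j => by rw [← hTval, hu]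
  refine ⟨u, 4 * ‖c‖ * K * ‖u‖, ?_, ?_⟩
  · have hFs : ∀ j, Summable (fun i : ℕ => F u (j + i)) := by
      intro j
      refine (ba_tail (N + j) (by omega) (2 * K * ‖u‖) (by positivity) _ ?_).1
      intro i
      have := hF u ‖u‖ (hu0 u) (j + i)
      push_cast at this ⊢
      simpa [add_assoc] using this
    have hPs : ∀ j, Summable (fun i : ℕ => ρ ^ (2 * i) * F u (j + i)) := by
      intro j
      refine (ba_tail (N + j) (by omega) (2 * K * ‖u‖) (by positivity) _ ?_).1
      intro i
      have := hF u ‖u‖ (hu0 u) (j + i)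
      rw [norm_mul, norm_pow]
      push_cast at this ⊢
      refine le_trans (mul_le_of_le_one_left (norm_nonneg _) (pow_le_one₀ (norm_nonneg _) hρ)) ?_
      simpa [add_assoc] using this
    have h1 : (1 - ρ ^ 2) ≠ 0 := fun h => hρ2 (by linear_combination -h)
    set S : ℕ → ℂ := fun j => ∑' i : ℕ, F u (j + i) with hS
    set P : ℕ → ℂ := fun j => ∑' i : ℕ, ρ ^ (2 * i) * F u (j + i) with hP
    have hSr : ∀ j, S j = F u j + S (j + 1) := by
      intro j
      simp only [hS]
      rw [(hFs j).tsum_eq_zero_add]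
      simp only [add_zero]
      congr 2; ext i
      rw [show j + (i + 1) = j + 1 + i by ring]
    have hPr : ∀ j, P j = F u j + ρ ^ 2 * P (j + 1) := by
      intro j
      simp only [hP]
      rw [(hPs j).tsum_eq_zero_add, ← tsum_mul_left]
      simp only [mul_zero, pow_zero, one_mul, add_zero]
      congr 2; ext i
      rw [show j + (i + 1) = j + 1 + i by ring]; ring
    have hA : ∀ j, A u j = c * (S j - ρ ^ 2 * P j) := by
      intro j
      simp only [A, hS, hP]
      rw [← tsum_mul_left, ← (hFs j).tsum_sub ((hPs j).mul_left _), ← tsum_mul_left]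
      congr 1; ext i; ring
    have hc1 : c * (1 - ρ ^ 2) = ρ := by rw [hc]; field_simp
    have hd : ∀ j, u (j + 1) - u j = - ρ * P j := by
      intro j
      rw [hfix, hfix j, hA, hA, hSr j]
      linear_combination (-P j) * hc1 + c * hPr j
    intro j
    rw [hd (j + 1), hd j]
    have := hPr j
    simp only [F] at this
    linear_combination this + P j * hρσ
  · intro j
    rw [hfix]
    simpa using (hT u ‖u‖ (norm_nonneg _) (hu0 u) j).2

lemma ba_dom (ρ σ : ℂ) (hρσ : ρ * σ = 1) (hσ : ‖σ‖ < 1) (K A : ℝ) (hK : 0 ≤ K) (hA0 : 0 ≤ A)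
    (hA : 3 * K ≤ A * (1 - ‖σ‖ ^ 2) / 2)
    (N : ℕ) (hN : 1 ≤ N) (hN2 : 2 * A ≤ N)
    (hN3 : ∀ x : ℝ, (N : ℝ) ≤ x → (1 + ‖σ‖ ^ 2) / 2 * (x + 1) ^ 2 ≤ x ^ 2) (a b : ℕ → ℂ)
    (ha : ∀ j, ‖a j‖ ≤ K / ((N : ℝ) + j + 1) ^ 2) (hb : ∀ j, ‖b j‖ ≤ K / ((N : ℝ) + j + 1) ^ 2) :
    ∃ (u : ℕ → ℂ) (C : ℝ), (∀ j, ρ * (u (j + 2) - u (j + 1)) - σ * (u (j + 1) - u j)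
      = a j * u (j + 1) + b j * u j) ∧ ∀ j, ‖u j - 1‖ ≤ C / ((N : ℝ) + j) := by
  have hN' : (1 : ℝ) ≤ N := by exact_mod_cast hN
  let p : ℕ → ℂ × ℂ := fun j => Nat.rec (1, 0)
    (fun j q => (q.1 + q.2, σ ^ 2 * q.2 + σ * (a j * (q.1 + q.2) + b j * q.1))) j
  let u : ℕ → ℂ := fun j => (p j).1
  let d : ℕ → ℂ := fun j => (p j).2
  have hu : ∀ j, u (j + 1) = u j + d j := fun j => rfl
  have hd : ∀ j, d (j + 1) = σ ^ 2 * d j + σ * (a j * u (j + 1) + b j * u j) := fun j => rfl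
  have hu0 : u 0 = 1 := rfl
  have hd0 : d 0 = 0 := rfl
  clear_value u d
  have hbd : ∀ j : ℕ, ‖d j‖ ≤ A / ((N : ℝ) + j + 1) ^ 2 ∧ ‖u j - 1‖ ≤ A * (1 / N - 1 / ((N : ℝ) + j)) := by
    have key : ∀ j : ℕ, A * (1 / N - 1 / ((N : ℝ) + j)) ≤ 1 / 2 := by
      intro j
      have h1 : A * (1 / N) ≤ 1 / 2 := by
        rw [mul_one_div, div_le_iff₀ (by linarith)]; linarith
      have h2 : 0 ≤ A * (1 / ((N : ℝ) + j)) := by positivity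
      linarith
    have hun : ∀ j : ℕ, ‖u j - 1‖ ≤ A * (1 / N - 1 / ((N : ℝ) + j)) → ‖u j‖ ≤ 3 / 2 := by
      intro j h
      have := norm_add_le (u j - 1) 1
      rw [sub_add_cancel, norm_one] at this
      linarith [key j]
    intro j
    induction j with
    | zero => rw [hd0, hu0]; simp; positivity
    | succ j ih =>
      obtain ⟨h1, h2⟩ := ih
      have h3 : ‖u (j + 1) - 1‖ ≤ A * (1 / N - 1 / ((N : ℝ) + (j + 1 : ℕ))) := by
        rw [hu, show u j + d j - 1 = (u j - 1) + d j by ring]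
        refine (norm_add_le _ _).trans ?_
        have := ba_sq ((N : ℝ) + j) A (by positivity) hA0
        push_cast
        rw [← add_assoc]
        linarith
      refine ⟨?_, h3⟩
      have hx := hN3 ((N : ℝ) + j + 1) (by have : (0 : ℝ) ≤ j := by positivity
                                           linarith)
      push_cast
      rw [← add_assoc]
      set x := (N : ℝ) + j + 1 with hxdef
      have hxpos : 0 < x := by positivity
      have e1 : ‖a j * u (j + 1)‖ ≤ K / x ^ 2 * (3 / 2) := by
        rw [norm_mul]; exact mul_le_mul (ha j) (hun _ h3) (norm_nonneg _) (by positivity)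
      have e2 : ‖b j * u j‖ ≤ K / x ^ 2 * (3 / 2) := by
        rw [norm_mul]; exact mul_le_mul (hb j) (hun _ h2) (norm_nonneg _) (by positivity)
      have e3 : ‖σ * (a j * u (j + 1) + b j * u j)‖ ≤ K / x ^ 2 * 3 := by
        rw [norm_mul]
        refine (mul_le_of_le_one_left (norm_nonneg _) hσ.le).trans ((norm_add_le _ _).trans ?_)
        linarith
      have e4 : ‖σ ^ 2 * d j‖ ≤ ‖σ‖ ^ 2 * (A / x ^ 2) := by
        rw [norm_mul, norm_pow]; gcongr
      rw [hd]
      calc _ ≤ _ := norm_add_le _ _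
        _ ≤ ‖σ‖ ^ 2 * (A / x ^ 2) + K / x ^ 2 * 3 := add_le_add e4 e3
        _ = (‖σ‖ ^ 2 * A + 3 * K) / x ^ 2 := by ring
        _ ≤ (A * ((1 + ‖σ‖ ^ 2) / 2)) / x ^ 2 := by gcongr; linarith
        _ ≤ A / (x + 1) ^ 2 := by
          rw [div_le_div_iff₀ (by positivity) (by positivity), mul_assoc]
          exact mul_le_mul_of_nonneg_left hx hA0
  have ht : ∀ j : ℕ, Summable (fun i => d (j + i)) ∧ ‖∑' i, d (j + i)‖ ≤ A / ((N : ℝ) + j) := by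
    intro j
    have := ba_tail (N + j) (by omega) A hA0 (fun i => d (j + i)) (by
      intro i
      have := (hbd (j + i)).1
      push_cast at this ⊢
      simpa [add_assoc] using this)
    push_cast at this
    exact this
  set L : ℂ := 1 + ∑' i, d i with hL
  have hLu : ∀ j, L = u j + ∑' i, d (j + i) := by
    intro j
    induction j with
    | zero => rw [hu0]; simp [hL]
    | succ j ih =>
      rw [ih, (ht j).1.tsum_eq_zero_add, hu, add_zero, ← add_assoc]
      congr 2; ext i
      rw [show j + (i + 1) = j + 1 + i by ring]
  have hL1 : 1 / 2 ≤ ‖L‖ := by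
    have h := (ht 0).2
    have h2 := hLu 0
    rw [hu0] at h2
    have h3 := norm_sub_le L (∑' i, d (0 + i))
    rw [show L - (∑' i, d (0 + i)) = 1 by rw [h2]; ring, norm_one] at h3
    have : A / ((N : ℝ) + (0 : ℕ)) ≤ 1 / 2 := by
      rw [div_le_iff₀ (by simp; linarith)]; simp; linarith
    linarith
  have hL0 : L ≠ 0 := by intro h; rw [h, norm_zero] at hL1; linarith
  refine ⟨fun j => u j / L, 2 * A, ?_, ?_⟩
  · intro j
    have h1 : u (j + 2) = u (j + 1) + d (j + 1) := hu (j + 1)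
    have h3 := hu j
    have h2 := hd j
    field_simp
    rw [h1, h2, h3]
    linear_combination (σ * d j + (a j * (u j + d j) + b j * u j)) * hρσ
  · intro j
    have : u j / L - 1 = - (∑' i, d (j + i)) / L := by
      rw [div_sub_one hL0, hLu j]; ring
    rw [this, norm_div, norm_neg, div_le_iff₀ (by linarith)]
    have h := (ht j).2
    have h4 : 0 ≤ A / ((N : ℝ) + j) := by positivity
    calc _ ≤ _ := h
      _ = 2 * A / ((N : ℝ) + j) * (1 / 2) := by ring
      _ ≤ _ := by gcongr

lemma ba_both (ρ σ : ℂ) (hρσ : ρ * σ = 1) (hρ2 : ρ ^ 2 ≠ 1) (K : ℝ) (hK : 0 ≤ K) (a b : ℕ → ℂ)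
    (ha : ∀ j, 1 ≤ j → ‖a j‖ ≤ K / ((j : ℝ) + 1) ^ 2)
    (hb : ∀ j, 1 ≤ j → ‖b j‖ ≤ K / ((j : ℝ) + 1) ^ 2) :
    ∃ (N : ℕ) (u : ℕ → ℂ) (C : ℝ), 1 ≤ N ∧
      (∀ j, N ≤ j → ρ * (u (j + 2) - u (j + 1)) - σ * (u (j + 1) - u j)
        = a j * u (j + 1) + b j * u j) ∧ ∀ j, N ≤ j → ‖u j - 1‖ ≤ C / (j : ℝ) := by
  have key : ∃ N : ℕ, 1 ≤ N ∧ ∃ (u : ℕ → ℂ) (C : ℝ),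
      (∀ j, ρ * (u (j + 2) - u (j + 1)) - σ * (u (j + 1) - u j)
      = a (N + j) * u (j + 1) + b (N + j) * u j) ∧ ∀ j : ℕ, ‖u j - 1‖ ≤ C / ((N : ℝ) + j) := by
    have ha' : ∀ N : ℕ, 1 ≤ N → ∀ j : ℕ, ‖a (N + j)‖ ≤ K / ((N : ℝ) + j + 1) ^ 2 := by
      intro N hN j
      have := ha (N + j) (by omega)
      push_cast at this
      exact this
    have hb' : ∀ N : ℕ, 1 ≤ N → ∀ j : ℕ, ‖b (N + j)‖ ≤ K / ((N : ℝ) + j + 1) ^ 2 := by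
      intro N hN j
      have := hb (N + j) (by omega)
      push_cast at this
      exact this
    rcases le_or_gt ‖ρ‖ 1 with h | h
    · obtain ⟨N, hN⟩ := exists_nat_ge (8 * ‖ρ / (1 - ρ ^ 2)‖ * K)
      refine ⟨N + 1, by omega, ?_⟩
      exact ba_rec ρ σ hρσ hρ2 h K hK (N + 1) (by omega) (by push_cast; linarith)
        (fun j => a (N + 1 + j)) (fun j => b (N + 1 + j)) (ha' _ (by omega)) (hb' _ (by omega))
    · have hσ : ‖σ‖ < 1 := by
        have h1 : ‖ρ‖ * ‖σ‖ = 1 := by rw [← norm_mul, hρσ, norm_one]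
        by_contra hc
        push Not at hc
        nlinarith
      have h2 : 0 < 1 - ‖σ‖ ^ 2 := by nlinarith [norm_nonneg σ]
      set A := 6 * K / (1 - ‖σ‖ ^ 2) with hA
      have hA0 : 0 ≤ A := by positivity
      obtain ⟨N, hN⟩ := exists_nat_ge (2 * A + 6 / (1 - ‖σ‖ ^ 2))
      have h6 : 0 ≤ 6 / (1 - ‖σ‖ ^ 2) := by positivity
      refine ⟨N + 1, by omega, ?_⟩
      refine ba_dom ρ σ hρσ hσ K A hK hA0 (le_of_eq ?_) (N + 1) (by omega) (by push_cast; linarith) ?_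
        (fun j => a (N + 1 + j)) (fun j => b (N + 1 + j)) (ha' _ (by omega)) (hb' _ (by omega))
      · rw [hA]; field_simp; ring
      · intro x hx
        push_cast at hx
        have h7 : 6 / (1 - ‖σ‖ ^ 2) ≤ x := by linarith
        rw [div_le_iff₀ h2] at h7
        have h8 : 1 ≤ x := by linarith [Nat.cast_nonneg (α := ℝ) N]
        nlinarith [mul_le_mul_of_nonneg_right h7 (by linarith : (0 : ℝ) ≤ x)]
  obtain ⟨N, hN, u, C, h1, h2⟩ := key
  refine ⟨N, fun j => u (j - N), C, hN, ?_, ?_⟩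
  · intro j hj
    obtain ⟨k, rfl⟩ := Nat.exists_eq_add_of_le hj
    simp only [add_assoc, Nat.add_sub_cancel_left]
    exact h1 k
  · intro j hj
    obtain ⟨k, rfl⟩ := Nat.exists_eq_add_of_le hj
    simp only [Nat.add_sub_cancel_left]
    push_cast
    exact h2 k

lemma ba_ext (P Q R : ℕ → ℂ) (hR : ∀ m, R m ≠ 0) (N : ℕ) : ∀ (v : ℕ → ℂ),
    (∀ m, N ≤ m → P m * v (m + 2) + Q m * v (m + 1) + R m * v m = 0) →
    ∃ v' : ℕ → ℂ, (∀ m, N ≤ m → v' m = v m) ∧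
      ∀ m, P m * v' (m + 2) + Q m * v' (m + 1) + R m * v' m = 0 := by
  induction N with
  | zero => intro v h; exact ⟨v, fun _ _ => rfl, fun m => h m (Nat.zero_le _)⟩
  | succ N ih =>
    intro v h
    obtain ⟨v', h1, h2⟩ := ih
      (Function.update v N (-(P N * v (N + 2) + Q N * v (N + 1)) / R N)) (by
        intro m hm
        rcases eq_or_lt_of_le hm with rfl | hm
        · rw [Function.update_of_ne (by omega), Function.update_of_ne (by omega),
            Function.update_self]
          field_simp [hR N]
          ring
        · rw [Function.update_of_ne (by omega), Function.update_of_ne (by omega),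
            Function.update_of_ne (by omega)]
          exact h m hm)
    refine ⟨v', fun m hm => ?_, h2⟩
    rw [h1 m (by omega), Function.update_of_ne (by omega)]

lemma ba_sqrt (z : ℂ) : (z ^ ((1 : ℂ) / 2)) ^ 2 = z := by
  rw [one_div]
  exact_mod_cast Complex.cpow_nat_inv_pow z (n := 2) (by norm_num)

lemma ba_s (Λ : ℂ) (n : ℝ) (hn : 0 < n) :
    ‖((n : ℂ) ^ 2 - Λ) ^ ((1 : ℂ) / 2) / n - 1‖ ≤ ‖Λ‖ / n ^ 2 := by
  set z := (n : ℂ) ^ 2 - Λ with hz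
  set s := z ^ ((1 : ℂ) / 2) with hs
  have hs2 : s ^ 2 = z := by
    rw [hs]
    exact ba_sqrt z
  have hre : 0 ≤ s.re := by
    by_cases h0 : z = 0
    · rw [hs, h0]; simp
    · rw [hs, Complex.cpow_def_of_ne_zero h0, Complex.exp_re]
      apply mul_nonneg (Real.exp_pos _).le
      have : (Complex.log z * (1 / 2)).im = Complex.arg z / 2 := by
        rw [show (1 / 2 : ℂ) = ((1 / 2 : ℝ) : ℂ) by push_cast; ring, Complex.im_mul_ofReal, Complex.log_im]
        ring
      rw [this]
      apply Real.cos_nonneg_of_neg_pi_div_two_le_of_le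
      · linarith [Complex.neg_pi_lt_arg z]
      · linarith [Complex.arg_le_pi z]
  have h1 : n ≤ ‖s + n‖ := by
    refine le_trans ?_ (Complex.re_le_norm _)
    simp; exact hre
  have h2 : ‖s - n‖ * ‖s + n‖ = ‖Λ‖ := by
    rw [← norm_mul, ← norm_neg Λ]
    congr 1
    linear_combination hs2 + hz
  have hn0 : (n : ℂ) ≠ 0 := by exact_mod_cast hn.ne'
  rw [div_sub_one hn0, norm_div, Complex.norm_real, Real.norm_of_nonneg hn.le,
    div_le_div_iff₀ hn (by positivity), ← h2]
  nlinarith [norm_nonneg (s - n), mul_le_mul_of_nonneg_left h1 (norm_nonneg (s - n))]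

lemma ba_theta (n : ℝ) (hn : 1 ≤ n) :
    0 ≤ √(n + 1) * √n / (n + 1 / 2) ∧ √(n + 1) * √n / (n + 1 / 2) ≤ 1 ∧
    1 - √(n + 1) * √n / (n + 1 / 2) ≤ 1 / n ^ 2 := by
  set θ := √(n + 1) * √n / (n + 1 / 2) with hθ
  have h0 : 0 ≤ θ := by positivity
  have h2 : θ ^ 2 = 1 - 1 / (4 * (n + 1 / 2) ^ 2) := by
    rw [hθ, div_pow, mul_pow, Real.sq_sqrt (by linarith), Real.sq_sqrt (by linarith)]
    have : n + 1 / 2 ≠ 0 := by positivity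
    field_simp
    ring
  have h3 : 0 ≤ 1 / (4 * (n + 1 / 2) ^ 2) := by positivity
  have h4 : θ ≤ 1 := by nlinarith
  refine ⟨h0, h4, ?_⟩
  have h5 : 1 / (4 * (n + 1 / 2) ^ 2) ≤ 1 / n ^ 2 := by
    apply one_div_le_one_div_of_le (by positivity); nlinarith
  nlinarith

lemma ba_tau (n : ℝ) (hn : 2 ≤ n) :
    |(n - 1 / 2) * √(n + 1) / (√(n - 1) * (n + 1 / 2)) - 1| ≤ 1 / n ^ 2 := by
  set τ := (n - 1 / 2) * √(n + 1) / (√(n - 1) * (n + 1 / 2)) with hτ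
  have hn1 : 0 < n - 1 := by linarith
  have hn2 : 0 < n - 1 / 2 := by linarith
  have h0 : 0 ≤ τ := by positivity
  have h2 : τ ^ 2 = 1 + 1 / (2 * ((n - 1) * (n + 1 / 2) ^ 2)) := by
    rw [hτ, div_pow, mul_pow, mul_pow, Real.sq_sqrt (by linarith), Real.sq_sqrt (by linarith)]
    have : n + 1 / 2 ≠ 0 := by positivity
    have := hn1.ne'
    field_simp
    ring
  have h3 : 0 ≤ 1 / (2 * ((n - 1) * (n + 1 / 2) ^ 2)) := by positivity
  have h4 : 1 ≤ τ := by nlinarith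
  rw [abs_of_nonneg (by linarith)]
  have h5 : 1 / (2 * ((n - 1) * (n + 1 / 2) ^ 2)) ≤ 1 / n ^ 2 := by
    apply one_div_le_one_div_of_le (by positivity); nlinarith
  nlinarith

lemma ba_main (ρ σ : ℂ) (hρσ : ρ * σ = 1) (hρ2 : ρ ^ 2 ≠ 1) (Λ : ℂ) :
    ∃ (v : ℕ → ℂ) (C : ℝ), 0 < C ∧
      (∀ m : ℕ, ((m : ℂ) + 3 / 2) * v (m + 2)
        + (-(ρ + σ) * (((m + 1 : ℕ) : ℂ) ^ 2 - Λ) ^ ((1 : ℂ) / 2)) * v (m + 1)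
        + ((m : ℂ) + 1 / 2) * v m = 0) ∧
      ∀ m : ℕ, 1 ≤ m → ‖(√(m : ℝ) : ℂ) * σ ^ m * v m - 1‖ ≤ C / m := by
  set s : ℕ → ℂ := fun m => (((m + 1 : ℕ) : ℂ) ^ 2 - Λ) ^ ((1 : ℂ) / 2) with hs
  let θ : ℕ → ℝ := fun m => √((m : ℝ) + 1 + 1) * √((m : ℝ) + 1) / ((m : ℝ) + 1 + 1 / 2)
  let κ : ℕ → ℂ := fun m => s m / ((m : ℝ) + 1 : ℝ) * (θ m : ℂ)
  let τ : ℕ → ℝ := fun m => ((m : ℝ) + 1 - 1 / 2) * √((m : ℝ) + 1 + 1) /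
    (√((m : ℝ) + 1 - 1) * ((m : ℝ) + 1 + 1 / 2))
  have hκ : ∀ m : ℕ, ‖κ m - 1‖ ≤ (‖Λ‖ + 1) / ((m : ℝ) + 1) ^ 2 := by
    intro m
    have h1 := ba_s Λ ((m : ℝ) + 1) (by positivity)
    obtain ⟨h2, h3, h4⟩ := ba_theta ((m : ℝ) + 1) (by simp)
    have h5 : κ m - 1 = (s m / ((m : ℝ) + 1 : ℝ) - 1) * (θ m : ℂ) + ((θ m - 1 : ℝ) : ℂ) := by
      simp only [κ]; push_cast; ring
    rw [h5, add_div]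
    refine (norm_add_le _ _).trans (add_le_add ?_ ?_)
    · rw [norm_mul, Complex.norm_real, Real.norm_of_nonneg h2]
      refine (mul_le_of_le_one_right (norm_nonneg _) h3).trans ?_
      simp only [hs]
      push_cast at h1 ⊢
      exact h1
    · rw [Complex.norm_real, Real.norm_eq_abs, abs_sub_comm, abs_of_nonneg (by linarith)]
      exact h4
  have hτ : ∀ m : ℕ, 1 ≤ m → ‖(τ m : ℂ) - 1‖ ≤ 1 / ((m : ℝ) + 1) ^ 2 := by
    intro m hm
    have hm' : (1 : ℝ) ≤ m := by exact_mod_cast hm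
    have := ba_tau ((m : ℝ) + 1) (by linarith)
    rw [← Real.norm_eq_abs, ← Complex.norm_real] at this
    push_cast at this
    simpa [τ] using this
  set K := ‖ρ + σ‖ * (‖Λ‖ + 1) + ‖σ‖ with hK
  obtain ⟨N, u, C, hN, h1, h2⟩ := ba_both ρ σ hρσ hρ2 K (by positivity)
    (fun m => (ρ + σ) * (κ m - 1)) (fun m => -σ * ((τ m : ℂ) - 1)) (by
      intro j _
      rw [norm_mul, hK]
      refine (mul_le_mul_of_nonneg_left (hκ j) (norm_nonneg _)).trans ?_
      rw [← mul_div_assoc]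
      gcongr
      linarith [norm_nonneg σ]) (by
      intro j hj
      rw [norm_mul, hK, norm_neg]
      refine (mul_le_mul_of_nonneg_left (hτ j hj) (norm_nonneg _)).trans ?_
      rw [← mul_div_assoc]
      gcongr
      rw [mul_one]
      have : 0 ≤ ‖ρ + σ‖ * (‖Λ‖ + 1) := by positivity
      linarith)
  have hρ0 : ρ ≠ 0 := left_ne_zero_of_mul_eq_one hρσ
  obtain ⟨v, h3, h4⟩ := ba_ext (fun m => (m : ℂ) + 3 / 2) (fun m => -(ρ + σ) * s m)
    (fun m => (m : ℂ) + 1 / 2) (by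
      intro m h
      have := congrArg Complex.re h
      simp at this
      have h' : (0 : ℝ) ≤ m := by positivity
      linarith) N (fun m => u m * ρ ^ m / (√(m : ℝ) : ℂ)) (by
      intro m hm
      have hm' : (1 : ℝ) ≤ m := by exact_mod_cast hN.trans hm
      have e := h1 m hm
      simp only [κ, τ, θ] at e
      rw [show (m : ℝ) + 1 + 1 = (m : ℝ) + 2 by ring, show (m : ℝ) + 1 - 1 = (m : ℝ) by ring] at e
      push_cast at e ⊢
      have q0 : (√(m : ℝ) : ℂ) ≠ 0 := by
        exact_mod_cast (Real.sqrt_pos.2 (by linarith)).ne'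
      have q1 : (√((m : ℝ) + 1) : ℂ) ≠ 0 :=
        Complex.ofReal_ne_zero.2 (Real.sqrt_pos.2 (by linarith)).ne'
      have q2 : (√((m : ℝ) + 2) : ℂ) ≠ 0 :=
        Complex.ofReal_ne_zero.2 (Real.sqrt_pos.2 (by linarith)).ne'
      have q3 : ((m : ℂ) + 1) = (√((m : ℝ) + 1) : ℂ) ^ 2 := by
        norm_cast
        rw [Real.sq_sqrt (by positivity)]
      have q4 : ((m : ℂ) + 3 / 2) ≠ 0 := by
        have : ((m : ℝ) + 3 / 2) ≠ 0 := by positivity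
        have h := Complex.ofReal_ne_zero.2 this
        push_cast at h
        exact h
      have q5 : (m : ℂ) + 1 + 1 / 2 = m + 3 / 2 := by ring
      have q6 : (m : ℂ) + 1 - 1 / 2 = m + 1 / 2 := by ring
      rw [q5, q6] at e
      generalize hy : s m = y at *
      have q3' : y / ((m : ℂ) + 1) = y / (√((m : ℝ) + 1) : ℂ) ^ 2 := by rw [← q3]
      rw [q3'] at e
      have hσ : σ = ρ⁻¹ := eq_inv_of_mul_eq_one_right hρσ
      rw [hσ] at e ⊢
      generalize (√(m : ℝ) : ℂ) = z0 at *
      generalize (√((m : ℝ) + 1) : ℂ) = z1 at *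
      generalize (√((m : ℝ) + 2) : ℂ) = z2 at *
      generalize (m : ℂ) + 3 / 2 = k at *
      generalize (m : ℂ) + 1 / 2 = l at *
      have : k * (u (m + 2) * ρ ^ (m + 2) / z2) + -(ρ + ρ⁻¹) * y * (u (m + 1) * ρ ^ (m + 1) / z1)
          + l * (u m * ρ ^ m / z0) = (ρ ^ (m + 1) * k / z2) * ((ρ * (u (m + 2) - u (m + 1)) - ρ⁻¹ * (u (m + 1) - u m)) - ((ρ + ρ⁻¹) * (y / z1 ^ 2 * (z2 * z1 / k) - 1) * u (m + 1) + -ρ⁻¹ * (l * z2 / (z0 * k) - 1) * u m)) := by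
        field_simp
        ring
      rw [this, e, sub_self, mul_zero])
  let g : ℕ → ℝ := fun m => ‖(√(m : ℝ) : ℂ) * σ ^ m * v m - 1‖
  have hS : 0 ≤ ∑ i ∈ Finset.range N, i * g i :=
    Finset.sum_nonneg (fun i _ => mul_nonneg (Nat.cast_nonneg _) (norm_nonneg _))
  refine ⟨v, |C| + (∑ i ∈ Finset.range N, i * g i) + 1, by positivity, h4, ?_⟩
  intro m hm
  have hm' : (1 : ℝ) ≤ m := by exact_mod_cast hm
  have hm0 : (0 : ℝ) < m := by linarith
  rcases lt_or_ge m N with h | h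
  · rw [le_div_iff₀ hm0]
    have := Finset.single_le_sum (f := fun i : ℕ => (i : ℝ) * g i)
      (fun i _ => mul_nonneg (Nat.cast_nonneg _) (norm_nonneg _)) (Finset.mem_range.2 h)
    simp only [g] at this hS ⊢
    rw [mul_comm]
    linarith [abs_nonneg C]
  · have q0 : (√(m : ℝ) : ℂ) ≠ 0 := by
      exact_mod_cast (Real.sqrt_pos.2 hm0).ne'
    have : (√(m : ℝ) : ℂ) * σ ^ m * v m = u m := by
      rw [h3 m h]
      have : σ ^ m * ρ ^ m = 1 := by rw [← mul_pow, mul_comm, hρσ, one_pow]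
      field_simp
      linear_combination u m * this
    rw [this]
    refine (h2 m h).trans ?_
    gcongr
    linarith [le_abs_self C]

lemma ba_fin (α : ℝ) (Λ ρ σ : ℂ) (hρσ : ρ * σ = 1) (hρ2 : ρ ^ 2 ≠ 1)
    (hsum : ρ + σ = -(2 / (α : ℂ))) :
    ∃ C : ℝ, 0 < C ∧ ∃ w : ℤ → ℂ,
      (∀ n : ℤ, n ≤ -1 →
        ((n : ℂ) + 1 / 2) * w (n + 1)
          - (2 / (α : ℂ)) * (((n : ℂ) ^ 2 - Λ) ^ ((1 : ℂ) / 2)) * w n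
          + ((n : ℂ) - 1 / 2) * w (n - 1) = 0) ∧
      (∀ n : ℤ, n ≤ -1 →
        ‖(Real.sqrt |(n : ℝ)| : ℂ) * σ ^ (-n) * w n - 1‖ ≤ C / |(n : ℝ)|) := by
  obtain ⟨v, C, hC, h1, h2⟩ := ba_main ρ σ hρσ hρ2 Λ
  refine ⟨C, hC, fun n => v (-n).toNat, ?_, ?_⟩
  · intro n hn
    obtain ⟨m, rfl⟩ : ∃ m : ℕ, n = -((m : ℤ) + 1) := ⟨(-n - 1).toNat, by omega⟩
    have e1 : (-(-((m : ℤ) + 1) + 1)).toNat = m := by omega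
    have e2 : (-(-((m : ℤ) + 1))).toNat = m + 1 := by omega
    have e3 : (-(-((m : ℤ) + 1) - 1)).toNat = m + 2 := by omega
    have h := h1 m
    simp only [e1, e2, e3]
    rw [hsum] at h
    push_cast at h ⊢
    rw [neg_sq]
    linear_combination -h
  · intro n hn
    obtain ⟨m, rfl⟩ : ∃ m : ℕ, n = -(m : ℤ) := ⟨(-n).toNat, by omega⟩
    have h := h2 m (by omega)
    simpa using h

/-- Instance (1.bam) of the Birkhoff–Adams theorem: for `α > 0`, `α ≠ 1` and
`Λ ∈ ℂ \ [0,∞)`, with `μ₊ = -1/α + √(1/α²-1)` and `μ₋ = -1/α - √(1/α²-1)`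
(principal branch), the recurrence (1.eq) has, as `n → -∞`, two solutions
with asymptotics `w_n^± = μ_±^n |n|^{-1/2} (1 + O(|n|^{-1}))`. -/
theorem birkhoff_adams_minus (α : ℝ) (hα : 0 < α) (hα1 : α ≠ 1)
    (Λ : ℂ) (hΛ : ∀ t : ℝ, 0 ≤ t → Λ ≠ (t : ℂ)) :
    ∃ C : ℝ, 0 < C ∧ ∃ wp wm : ℤ → ℂ,
      (∀ n : ℤ, n ≤ -1 →
        ((n : ℂ) + 1 / 2) * wp (n + 1)
          - (2 / (α : ℂ)) * (((n : ℂ) ^ 2 - Λ) ^ ((1 : ℂ) / 2)) * wp n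
          + ((n : ℂ) - 1 / 2) * wp (n - 1) = 0) ∧
      (∀ n : ℤ, n ≤ -1 →
        ((n : ℂ) + 1 / 2) * wm (n + 1)
          - (2 / (α : ℂ)) * (((n : ℂ) ^ 2 - Λ) ^ ((1 : ℂ) / 2)) * wm n
          + ((n : ℂ) - 1 / 2) * wm (n - 1) = 0) ∧
      (∀ n : ℤ, n ≤ -1 →
        ‖(Real.sqrt |(n : ℝ)| : ℂ)
            * (-(1 / (α : ℂ)) + ((1 / (α : ℂ) ^ 2 - 1) ^ ((1 : ℂ) / 2))) ^ (-n)
            * wp n - 1‖ ≤ C / |(n : ℝ)|) ∧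
      (∀ n : ℤ, n ≤ -1 →
        ‖(Real.sqrt |(n : ℝ)| : ℂ)
            * (-(1 / (α : ℂ)) - ((1 / (α : ℂ) ^ 2 - 1) ^ ((1 : ℂ) / 2))) ^ (-n)
            * wm n - 1‖ ≤ C / |(n : ℝ)|) := by
  have hα0 : (α : ℂ) ≠ 0 := by exact_mod_cast hα.ne'
  set r := (1 / (α : ℂ) ^ 2 - 1) ^ ((1 : ℂ) / 2) with hr
  have hr2 : r ^ 2 = 1 / (α : ℂ) ^ 2 - 1 := by
    rw [hr]
    exact ba_sqrt _
  have hr0 : r ≠ 0 := by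
    intro h
    rw [h] at hr2
    have h1 : (α : ℂ) ^ 2 = 1 := by
      field_simp at hr2
      linear_combination hr2
    have h2 : α ^ 2 = 1 := by exact_mod_cast h1
    apply hα1
    exact (pow_eq_one_iff_of_nonneg hα.le two_ne_zero).1 h2
  have hprod : (-(1 / (α : ℂ)) + r) * (-(1 / (α : ℂ)) - r) = 1 := by
    linear_combination -hr2
  have hne : ∀ x y : ℂ, x * y = 1 → x ≠ y → x ^ 2 ≠ 1 := by
    intro x y h h1 h2
    have h3 : x ≠ 0 := left_ne_zero_of_mul_eq_one h
    apply h1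
    apply mul_left_cancel₀ h3
    rw [h, ← h2, sq]
  obtain ⟨C1, hC1, wp, p1, p2⟩ := ba_fin α Λ (-(1 / (α : ℂ)) - r) (-(1 / (α : ℂ)) + r)
    (by rw [mul_comm]; exact hprod)
    (hne _ _ (by rw [mul_comm]; exact hprod)
      (fun h => hr0 (by linear_combination (-1 / 2 : ℂ) * h))) (by ring)
  obtain ⟨C2, hC2, wm, m1, m2⟩ := ba_fin α Λ (-(1 / (α : ℂ)) + r) (-(1 / (α : ℂ)) - r) hprod
    (hne _ _ hprod (fun h => hr0 (by linear_combination (1 / 2 : ℂ) * h))) (by ring)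
  refine ⟨C1 + C2, by positivity, wp, wm, p1, m1, ?_, ?_⟩
  · intro n hn
    refine (p2 n hn).trans ?_
    gcongr
    linarith
  · intro n hn
    refine (m2 n hn).trans ?_
    gcongr
    linarith
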